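/- Consider the D-dimensional scalar λ-bracket of hydrodynamic type {u_λ u} = Σ_{α=1}^D (a_α λ_α + b_α ∂_α u) on the algebra of differential polynomials in one generator u with D commuting derivations ∂_1,…,∂_D, where a_α, b_α depend only on u. This λ-bracket is skew-symmetric if and only if 2b_α = ∂a_α/∂u for all α = 1,…,D (Mokhov's skew-symmetry condition); moreover, assuming skew-symmetry, it defines a D-dimensional Poisson vertex algebra structure if additionally a_α = c_α g for some constants c_α and a single function g = g(u), in which case {u_λ u} = Σ_α c_α (2g λ_α + (∂g/∂u) ∂_α u) up to overall normalization and the Jacobi identity holds. -/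

import Mathlib

open MvPolynomial

/-- The algebra of differential polynomials in one generator `u` with `D`
commuting derivations: variables `u^{(M)}` indexed by multi-indices
`M : Fin D →₀ ℕ`; the generator is `u = u^{(0)}`. -/
abbrev DiffPolyD (D : ℕ) := MvPolynomial (Fin D →₀ ℕ) ℂ

/-- `λ`-polynomials in `λ_1, …, λ_D` with coefficients in `DiffPolyD D`. -/
abbrev LPolyD (D : ℕ) := MvPolynomial (Fin D) (DiffPolyD D)

/-- The `α`-th total derivative `∂_α`, with `∂_α u^{(M)} = u^{(M + e_α)}`. -/
noncomputable def derD (D : ℕ) (α : Fin D) :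
    Derivation ℂ (DiffPolyD D) (DiffPolyD D) :=
  MvPolynomial.mkDerivation ℂ (fun M => MvPolynomial.X (M + Finsupp.single α 1))

/-- `∂_α` applied coefficientwise to a `λ`-polynomial. -/
noncomputable def dmapD (D : ℕ) (α : Fin D) (p : LPolyD D) : LPolyD D :=
  p.support.sum fun N =>
    MvPolynomial.monomial N (derD D α (MvPolynomial.coeff N p))

/-- The operator `λ_α + ∂_α`. -/
noncomputable def opSD (D : ℕ) (α : Fin D) (p : LPolyD D) : LPolyD D :=
  MvPolynomial.X α * p + dmapD D α p

/-- The operator `-λ_α - ∂_α`. -/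
noncomputable def opTD (D : ℕ) (α : Fin D) (p : LPolyD D) : LPolyD D :=
  -(MvPolynomial.X α * p) - dmapD D α p

/-- The composite operator `(λ + ∂)^N = Π_α (λ_α + ∂_α)^{N_α}`. -/
noncomputable def opSN (D : ℕ) (N : Fin D →₀ ℕ) (p : LPolyD D) : LPolyD D :=
  (List.finRange D).foldl (fun q α => (opSD D α)^[N α] q) p

/-- The composite operator `(-λ - ∂)^N = Π_α (-λ_α - ∂_α)^{N_α}`. -/
noncomputable def opTN (D : ℕ) (N : Fin D →₀ ℕ) (p : LPolyD D) : LPolyD D :=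
  (List.finRange D).foldl (fun q α => (opTD D α)^[N α] q) p

/-- `H(λ+∂)` applied to `r`: expand `H = Σ_P c_P λ^P` and apply
`Σ_P c_P (λ+∂)^P` to `r`. -/
noncomputable def hOp (D : ℕ) (H : LPolyD D) (r : LPolyD D) : LPolyD D :=
  H.support.sum fun P =>
    MvPolynomial.C (MvPolynomial.coeff P H) * opSN D P r

/-- `{u_{-λ-∂} u}` obtained from `{u_λ u} = Σ_N c_N λ^N` as `Σ_N (-λ-∂)^N c_N`. -/
noncomputable def negSubstD (D : ℕ) (H : LPolyD D) : LPolyD D :=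
  H.support.sum fun N => opTN D N (MvPolynomial.C (MvPolynomial.coeff N H))

/-- The `D`-dimensional Master Formula (scalar case):
`{f_λ g} = Σ_{M,N} (∂g/∂u^{(N)}) (λ+∂)^N H(λ+∂) (-λ-∂)^M (∂f/∂u^{(M)})`. -/
noncomputable def mfD (D : ℕ) (H : LPolyD D) (f g : DiffPolyD D) : LPolyD D :=
  ∑ᶠ (M : Fin D →₀ ℕ), ∑ᶠ (N : Fin D →₀ ℕ),
    MvPolynomial.C (MvPolynomial.pderiv N g) *
      opSN D N (hOp D H (opTN D M (MvPolynomial.C (MvPolynomial.pderiv M f))))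

/-- The Jacobi identity left-hand side on the generator `u`:
`{u_λ{u_μ u}} - {u_μ{u_λ u}} - {{u_λ u}_{λ+μ} u}`, an element of
`V[λ][μ]` (outer variables `μ_α`, inner variables `λ_α`). -/
noncomputable def jacD (D : ℕ) (H : LPolyD D) :
    MvPolynomial (Fin D) (LPolyD D) :=
  (H.support.sum fun M =>
    MvPolynomial.monomial M (mfD D H (MvPolynomial.X 0) (MvPolynomial.coeff M H)))
  - (H.support.sum fun N =>
      (mfD D H (MvPolynomial.X 0) (MvPolynomial.coeff N H)).support.sum fun K =>
        MvPolynomial.monomial K (MvPolynomial.monomial N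
          (MvPolynomial.coeff K
            (mfD D H (MvPolynomial.X 0) (MvPolynomial.coeff N H)))))
  - (H.support.sum fun N =>
      (mfD D H (MvPolynomial.coeff N H) (MvPolynomial.X 0)).support.sum fun K =>
        MvPolynomial.C (MvPolynomial.monomial N
          (MvPolynomial.coeff K
            (mfD D H (MvPolynomial.coeff N H) (MvPolynomial.X 0)))) *
        ∏ α : Fin D,
          (MvPolynomial.C (MvPolynomial.X α : LPolyD D) +
            MvPolynomial.X α) ^ (K α))

theorem mok_foldl_zero {D : ℕ} {A : Type*} (f : Fin D → A → A) (l : List (Fin D)) (p : A) :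
    l.foldl (fun q α => (f α)^[(0 : Fin D →₀ ℕ) α] q) p = p := by
  induction l generalizing p with
  | nil => rfl
  | cons x l ih => simp

theorem mok_foldl_single {D : ℕ} {A : Type*} (f : Fin D → A → A) (β : Fin D)
    (l : List (Fin D)) (hl : l.Nodup) (p : A) :
    l.foldl (fun q α => (f α)^[(Finsupp.single β 1 : Fin D →₀ ℕ) α] q) p
      = if β ∈ l then f β p else p := by
  induction l generalizing p with
  | nil => simp
  | cons x l ih =>
    rw [List.nodup_cons] at hl
    rw [List.foldl_cons, ih hl.2]
    by_cases hx : β = x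
    · subst hx
      simp [hl.1]
    · simp [hx]

theorem mok_opSN_zero (D : ℕ) (p : LPolyD D) : opSN D 0 p = p :=
  mok_foldl_zero (opSD D) _ p

theorem mok_opTN_zero (D : ℕ) (p : LPolyD D) : opTN D 0 p = p :=
  mok_foldl_zero (opTD D) _ p

theorem mok_opSN_single (D : ℕ) (β : Fin D) (p : LPolyD D) :
    opSN D (Finsupp.single β 1) p = opSD D β p := by
  unfold opSN
  rw [mok_foldl_single (opSD D) β _ (List.nodup_finRange D) p]
  simp

theorem mok_opTN_single (D : ℕ) (β : Fin D) (p : LPolyD D) :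
    opTN D (Finsupp.single β 1) p = opTD D β p := by
  unfold opTN
  rw [mok_foldl_single (opTD D) β _ (List.nodup_finRange D) p]
  simp

theorem mok_coeff_dmap (D : ℕ) (α : Fin D) (p : LPolyD D) (N : Fin D →₀ ℕ) :
    coeff N (dmapD D α p) = derD D α (coeff N p) := by
  classical
  unfold dmapD
  rw [coeff_sum]
  simp only [coeff_monomial]
  rw [Finset.sum_ite_eq']
  split_ifs with h
  · rfl
  · rw [notMem_support_iff.mp h, map_zero]

theorem mok_dmap_add (D : ℕ) (α : Fin D) (p q : LPolyD D) :
    dmapD D α (p + q) = dmapD D α p + dmapD D α q := by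
  ext1 N; simp [mok_coeff_dmap]

theorem mok_dmap_zero (D : ℕ) (α : Fin D) : dmapD D α 0 = 0 := by
  ext1 N; simp [mok_coeff_dmap]

theorem mok_dmap_C (D : ℕ) (α : Fin D) (f : DiffPolyD D) :
    dmapD D α (C f) = C (derD D α f) := by
  classical
  ext1 N
  simp only [mok_coeff_dmap, coeff_C]
  split_ifs <;> simp

theorem mok_dmap_mul_C (D : ℕ) (α : Fin D) (p : MvPolynomial (Fin D) ℂ) (f : DiffPolyD D) :
    dmapD D α (C f * map C p) = C (derD D α f) * map C p := by
  ext1 N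
  have h : derD D α (C (coeff N p)) = 0 := by
    rw [← algebraMap_eq, Derivation.map_algebraMap]
  rw [mok_coeff_dmap, coeff_C_mul, coeff_C_mul, coeff_map, Derivation.leibniz, h, smul_zero,
    zero_add, smul_eq_mul, mul_comm]

/-- vanishing outside of `0` and the `e_α` -/
def MokSmall {D : ℕ} {A : Type*} [Zero A] (c : (Fin D →₀ ℕ) → A) : Prop :=
  ∀ N, N ≠ 0 → (∀ α, N ≠ Finsupp.single α 1) → c N = 0

theorem mok_sum {D : ℕ} {A : Type*} [AddCommMonoid A] (T : Finset (Fin D →₀ ℕ))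
    (F : (Fin D →₀ ℕ) → A) (hF : MokSmall F) (hT : ∀ N, N ∉ T → F N = 0) :
    T.sum F = F 0 + ∑ α, F (Finsupp.single α 1) := by
  classical
  have hinj : Function.Injective (fun α : Fin D => (Finsupp.single α 1 : Fin D →₀ ℕ)) :=
    fun x y h => Finsupp.single_left_injective one_ne_zero h
  have h0 : (0 : Fin D →₀ ℕ) ∉ Finset.univ.image
      (fun α : Fin D => (Finsupp.single α 1 : Fin D →₀ ℕ)) := by
    simp
  rw [← Finset.sum_image (f := F) (g := fun α : Fin D => (Finsupp.single α 1 : Fin D →₀ ℕ))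
    (fun x _ y _ h => hinj h), ← Finset.sum_insert h0]
  set S := insert (0 : Fin D →₀ ℕ) (Finset.univ.image
      (fun α : Fin D => (Finsupp.single α 1 : Fin D →₀ ℕ))) with hS
  rw [Finset.sum_subset (Finset.subset_union_left : T ⊆ T ∪ S) (fun N _ h => hT N h),
    Finset.sum_subset (Finset.subset_union_right : S ⊆ T ∪ S)]
  intro N _ h
  apply hF
  · rintro rfl; simp [hS] at h
  · rintro α rfl; simp [hS] at h

theorem mok_finsum {D : ℕ} {A : Type*} [AddCommMonoid A]
    (F : (Fin D →₀ ℕ) → A) (hF : MokSmall F) :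
    ∑ᶠ N, F N = F 0 + ∑ α, F (Finsupp.single α 1) := by
  classical
  have hfin : (Function.support F).Finite := by
    apply Set.Finite.subset (Finset.finite_toSet (insert (0 : Fin D →₀ ℕ) (Finset.univ.image
      (fun α : Fin D => (Finsupp.single α 1 : Fin D →₀ ℕ)))))
    intro N hN
    by_contra h
    apply hN
    apply hF
    · rintro rfl; simp at h
    · rintro α rfl; simp at h
  rw [finsum_eq_sum F hfin, mok_sum _ F hF]
  intro N hN
  simpa using hN

section
variable {D : ℕ} (B : DiffPolyD D) (A : Fin D → DiffPolyD D) (H : LPolyD D)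

theorem mok_H_coeff (hH : H = C B + ∑ α, C (A α) * X α) :
    coeff 0 H = B ∧ (∀ α, coeff (Finsupp.single α 1) H = A α) ∧
      MokSmall (fun N => coeff N H) := by
  classical
  subst hH
  refine ⟨?_, ?_, ?_⟩
  · simp [coeff_sum, coeff_C_mul, coeff_X]
  · intro β
    have h0 : (0 : Fin D →₀ ℕ) ≠ Finsupp.single β 1 := by
      intro h; simpa using h.symm
    have : ∀ α, (Finsupp.single α 1 : Fin D →₀ ℕ) = Finsupp.single β 1 ↔ α = β := fun α =>
      (Finsupp.single_left_injective one_ne_zero).eq_iff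
    simp [coeff_sum, coeff_C_mul, coeff_X, coeff_C, h0, this]
  · intro N h0 h1
    simp [coeff_sum, coeff_C_mul, coeff_X, coeff_C, h0.symm, fun α => (h1 α).symm]

theorem mok_H_sum (hH : H = C B + ∑ α, C (A α) * X α) {M : Type*} [AddCommMonoid M]
    (F : (Fin D →₀ ℕ) → DiffPolyD D → M) (hF : ∀ N, F N 0 = 0) :
    (H.support.sum fun N => F N (coeff N H)) =
      F 0 B + ∑ α, F (Finsupp.single α 1) (A α) := by
  obtain ⟨h0, h1, h2⟩ := mok_H_coeff B A H hH
  rw [mok_sum]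
  · simp [h0, h1]
  · intro N hN hN'
    have := h2 N hN hN'
    simp only at this
    simp only [this, hF]
  · intro N hN
    rw [notMem_support_iff.mp hN, hF]

theorem mok_foldl_zz {D : ℕ} {A : Type*} [Zero A] (f : Fin D → A → A) (hf : ∀ α, f α 0 = 0)
    (N : Fin D →₀ ℕ) (l : List (Fin D)) :
    l.foldl (fun q α => (f α)^[N α] q) 0 = 0 := by
  induction l with
  | nil => rfl
  | cons x l ih =>
    rw [List.foldl_cons, Function.iterate_fixed (hf x), ih]

theorem mok_opTN_zz (D : ℕ) (N : Fin D →₀ ℕ) : opTN D N 0 = 0 :=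
  mok_foldl_zz (opTD D) (fun α => by simp [opTD, mok_dmap_zero]) N _

theorem mok_opSN_zz (D : ℕ) (N : Fin D →₀ ℕ) : opSN D N 0 = 0 :=
  mok_foldl_zz (opSD D) (fun α => by simp [opSD, mok_dmap_zero]) N _

theorem mok_hOp (hH : H = C B + ∑ α, C (A α) * X α) (r : LPolyD D) :
    hOp D H r = C B * r + ∑ α, C (A α) * (X α * r + dmapD D α r) := by
  unfold hOp
  rw [mok_H_sum B A H hH (fun P c => C c * opSN D P r) (by simp)]
  simp [mok_opSN_zero, mok_opSN_single, opSD]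

theorem mok_negSubst (hH : H = C B + ∑ α, C (A α) * X α) :
    negSubstD D H = C B + ∑ α, (-(X α * C (A α)) - C (derD D α (A α))) := by
  unfold negSubstD
  rw [mok_H_sum B A H hH (fun P c => opTN D P (C c)) (by simp [mok_opTN_zz])]
  simp [mok_opTN_zero, mok_opTN_single, opTD, mok_dmap_C]

theorem mok_hOp_zero (H : LPolyD D) : hOp D H 0 = 0 := by
  simp [hOp, mok_opSN_zz]

theorem mok_hOp_one (hH : H = C B + ∑ α, C (A α) * X α) : hOp D H 1 = H := by
  have h1 : ∀ α, dmapD D α (1 : LPolyD D) = 0 := fun α => by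
    have := mok_dmap_C D α 1
    simpa using this
  rw [mok_hOp B A H hH]
  simp [h1, hH]

theorem mok_mf_left (hH : H = C B + ∑ α, C (A α) * X α) (f : DiffPolyD D)
    (hf : MokSmall (fun N => pderiv N f)) :
    mfD D H (X 0) f = C (pderiv 0 f) * H +
      ∑ α, C (pderiv (Finsupp.single α 1) f) * (X α * H + dmapD D α H) := by
  classical
  unfold mfD
  rw [finsum_eq_single _ 0]
  · rw [mok_finsum]
    · simp [mok_opSN_zero, mok_opTN_zero, mok_opSN_single, mok_hOp_one B A H hH, opSD]
    · intro N h h'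
      have := hf N h h'
      simp only at this
      simp [this]
  · intro M hM
    rw [pderiv_X_of_ne hM.symm]
    simp [mok_opTN_zz, mok_hOp_zero, mok_opSN_zz]

theorem mok_mf_right (f : DiffPolyD D)
    (hf : MokSmall (fun N => pderiv N f)) :
    mfD D H f (X 0) = hOp D H (C (pderiv 0 f)) +
      ∑ α, hOp D H (-(X α * C (pderiv (Finsupp.single α 1) f))
        - C (derD D α (pderiv (Finsupp.single α 1) f))) := by
  classical
  unfold mfD
  have : ∀ M : Fin D →₀ ℕ, (∑ᶠ (N : Fin D →₀ ℕ),
    MvPolynomial.C (MvPolynomial.pderiv N (X 0 : DiffPolyD D)) *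
      opSN D N (hOp D H (opTN D M (MvPolynomial.C (MvPolynomial.pderiv M f))))) =
      hOp D H (opTN D M (MvPolynomial.C (MvPolynomial.pderiv M f))) := by
    intro M
    rw [finsum_eq_single _ 0]
    · simp [mok_opSN_zero]
    · intro N hN
      rw [pderiv_X_of_ne hN.symm]
      simp
  simp only [this]
  rw [mok_finsum]
  · simp [mok_opTN_zero, mok_opTN_single, opTD, mok_dmap_C]
  · intro N h h'
    have := hf N h h'
    simp only at this
    simp [this, mok_opTN_zz, mok_hOp_zero]

theorem mok_pderiv_aeval (N : Fin D →₀ ℕ) (p : Polynomial ℂ) :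
    pderiv N (Polynomial.aeval (X 0 : DiffPolyD D) p) =
      Polynomial.aeval (X 0 : DiffPolyD D) p.derivative * pderiv N (X 0 : DiffPolyD D) := by
  rw [Derivation.map_aeval]; rfl

theorem mok_der_aeval (α : Fin D) (p : Polynomial ℂ) :
    derD D α (Polynomial.aeval (X 0 : DiffPolyD D) p) =
      Polynomial.aeval (X 0 : DiffPolyD D) p.derivative * X (Finsupp.single α 1) := by
  rw [Derivation.map_aeval, derD, mkDerivation_X, zero_add]; rfl

theorem mok_small_aeval (p : Polynomial ℂ) :
    MokSmall (fun N => pderiv N (Polynomial.aeval (X 0 : DiffPolyD D) p)) := by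
  intro N h _
  simp only
  rw [mok_pderiv_aeval, pderiv_X_of_ne h.symm, mul_zero]

theorem mok_jac (hH : H = C B + ∑ α, C (A α) * X α) :
    jacD D H =
      (C (mfD D H (X 0) B) + ∑ α, X α * C (mfD D H (X 0) (A α)))
      - (map C (mfD D H (X 0) B) + ∑ α, C (X α) * map C (mfD D H (X 0) (A α)))
      - (eval₂Hom (C.comp C) (fun α => C (X α) + X α) (mfD D H B (X 0)) +
        ∑ α, C (X α) * eval₂Hom (C.comp C) (fun α => C (X α) + X α) (mfD D H (A α) (X 0))) := by
  have z1 : mfD D H (X 0) 0 = 0 := by simp [mfD]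
  have z2 : mfD D H 0 (X 0) = 0 := by simp [mfD, mok_opTN_zz, mok_hOp_zero, mok_opSN_zz]
  have e2 : ∀ (N : Fin D →₀ ℕ) (p : LPolyD D), (p.support.sum fun K =>
      monomial K (monomial N (coeff K p))) = C (monomial N (1 : DiffPolyD D)) * map C p := by
    intro N p
    conv_rhs => rw [p.as_sum]
    rw [map_sum, Finset.mul_sum]
    refine Finset.sum_congr rfl fun K _ => ?_
    rw [map_monomial, C_mul_monomial, mul_comm (monomial N 1), C_mul_monomial, mul_one]
  have e3 : ∀ (N : Fin D →₀ ℕ) (p : LPolyD D), (p.support.sum fun K =>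
      C (monomial N (coeff K p)) * ∏ α : Fin D, (C (X α : LPolyD D) + X α) ^ (K α)) =
      C (monomial N (1 : DiffPolyD D)) *
        eval₂Hom (C.comp C) (fun α => C (X α : LPolyD D) + X α) p := by
    intro N p
    rw [coe_eval₂Hom, eval₂_eq', Finset.mul_sum]
    refine Finset.sum_congr rfl fun K _ => ?_
    rw [RingHom.comp_apply, ← mul_assoc, ← C_mul, mul_comm (monomial N 1),
      C_mul_monomial, mul_one]
  unfold jacD
  simp only [e2, e3]
  rw [mok_H_sum B A H hH (fun M c => monomial M (mfD D H (X 0) c)) (by simp [z1]),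
    mok_H_sum B A H hH (fun N c => C (monomial N (1 : DiffPolyD D)) * map C (mfD D H (X 0) c))
      (by simp [z1]),
    mok_H_sum B A H hH (fun N c => C (monomial N (1 : DiffPolyD D)) *
      eval₂Hom (C.comp C) (fun α => C (X α : LPolyD D) + X α) (mfD D H c (X 0)))
      (by simp [z2])]
  have e4 : ∀ (α : Fin D) (p : LPolyD D), monomial (Finsupp.single α 1 : Fin D →₀ ℕ) p = X α * C p := by
    intro α p
    rw [mul_comm, C_mul_X_eq_monomial]
  have e5 : ∀ α : Fin D, monomial (Finsupp.single α 1) (1 : DiffPolyD D) = X α := fun α => rfl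
  have e6 : monomial (0 : Fin D →₀ ℕ) (1 : DiffPolyD D) = 1 := rfl
  have e7 : ∀ p : LPolyD D, monomial (0 : Fin D →₀ ℕ) p = C p := fun p => rfl
  simp only [e4, e5, e6, e7, C_1, one_mul]
end

theorem mok_skew (D : ℕ) (a b : Fin D → Polynomial ℂ) :
    (C (∑ α, Polynomial.aeval (X 0 : DiffPolyD D) (b α) * X (Finsupp.single α 1)) +
      ∑ α, C (Polynomial.aeval (X 0 : DiffPolyD D) (a α)) * X α) +
      (C (∑ α, Polynomial.aeval (X 0 : DiffPolyD D) (b α) * X (Finsupp.single α 1)) +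
      ∑ α, (-(X α * C (Polynomial.aeval (X 0 : DiffPolyD D) (a α))) -
        C (derD D α (Polynomial.aeval (X 0 : DiffPolyD D) (a α))))) = (0 : LPolyD D) ↔
    ∀ α : Fin D, 2 * b α = Polynomial.derivative (a α) := by
  classical
  have key : (C (∑ α, Polynomial.aeval (X 0 : DiffPolyD D) (b α) * X (Finsupp.single α 1)) +
      ∑ α, C (Polynomial.aeval (X 0 : DiffPolyD D) (a α)) * X α) +
      (C (∑ α, Polynomial.aeval (X 0 : DiffPolyD D) (b α) * X (Finsupp.single α 1)) +
      ∑ α, (-(X α * C (Polynomial.aeval (X 0 : DiffPolyD D) (a α))) -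
        C (derD D α (Polynomial.aeval (X 0 : DiffPolyD D) (a α))))) =
      (C (∑ α, Polynomial.aeval (X 0 : DiffPolyD D) (2 * b α - Polynomial.derivative (a α)) *
        X (Finsupp.single α 1)) : LPolyD D) := by
    simp only [map_sum, ← Finset.sum_add_distrib, mok_der_aeval]
    refine Finset.sum_congr rfl fun α _ => ?_
    simp only [map_sub, map_mul, map_ofNat]
    ring
  rw [key, map_eq_zero_iff _ (C_injective _ _)]
  constructor
  · intro h β
    have h2 := congrArg (pderiv (Finsupp.single β 1)) h
    have h0 : (0 : Fin D →₀ ℕ) ≠ Finsupp.single β 1 := by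
      intro h; simpa using h.symm
    have hi : ∀ α, (Finsupp.single α 1 : Fin D →₀ ℕ) = Finsupp.single β 1 ↔ α = β := fun α =>
      (Finsupp.single_left_injective one_ne_zero).eq_iff
    simp only [map_sum, Derivation.leibniz, mok_pderiv_aeval, pderiv_X_of_ne h0, mul_zero,
      add_zero, map_zero, pderiv_X, Pi.single_apply, hi, smul_eq_mul, mul_ite, mul_one] at h2
    rw [Finset.sum_ite_eq' Finset.univ β] at h2
    rw [if_pos (Finset.mem_univ _)] at h2
    have ht : Transcendental ℂ (X 0 : DiffPolyD D) := transcendental_X _ _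
    have := (transcendental_iff.mp ht) _ h2
    exact sub_eq_zero.mp this
  · intro h
    refine Finset.sum_eq_zero fun α _ => ?_
    rw [h α, sub_self, map_zero, zero_mul]

theorem mok_jac_final (D : ℕ) (cc : Fin D → ℂ) (g k : Polynomial ℂ)
    (hk : g.derivative = 2 * k) (H : LPolyD D)
    (hH : H = C (∑ α, Polynomial.aeval (X 0 : DiffPolyD D) (Polynomial.C (cc α) * k) *
        X (Finsupp.single α 1)) +
      ∑ α, C (Polynomial.aeval (X 0 : DiffPolyD D) (Polynomial.C (cc α) * g)) * X α) :
    jacD D H = 0 := by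
  classical
  have hH0 := hH
  set ev : Polynomial ℂ →ₐ[ℂ] DiffPolyD D := Polynomial.aeval (X 0 : DiffPolyD D) with hev
  set G : DiffPolyD D := ev g with hG
  set h : DiffPolyD D := ev k with hh
  set h' : DiffPolyD D := ev k.derivative with hh'
  set U : DiffPolyD D := ∑ α, C (cc α) * X (Finsupp.single α 1) with hU
  set l₀ : MvPolynomial (Fin D) ℂ := ∑ α, C (cc α) * X α with hl0
  set l : LPolyD D := map C l₀ with hl
  have hlsum : l = ∑ α, C (C (cc α)) * X α := by
    simp [hl, hl0]
  have evC : ∀ (z : ℂ) (p : Polynomial ℂ), ev (Polynomial.C z * p) = C z * ev p := by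
    intro z p
    rw [map_mul, hev, Polynomial.aeval_C, algebraMap_eq]
  have evd : ev g.derivative = 2 * h := by rw [hk, map_mul, map_ofNat]
  have hB : (∑ α, ev (Polynomial.C (cc α) * k) * X (Finsupp.single α 1)) = h * U := by
    rw [hU, Finset.mul_sum]
    refine Finset.sum_congr rfl fun α _ => ?_
    rw [evC]; ring
  have hHl : H = C (h * U) + C G * l := by
    rw [hH, hB, hlsum]
    congr 1
    rw [Finset.mul_sum]
    refine Finset.sum_congr rfl fun α _ => ?_
    rw [evC, C_mul]; ring
  -- pderivs
  have h0ne : ∀ β : Fin D, (0 : Fin D →₀ ℕ) ≠ Finsupp.single β 1 := by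
    intro β h; simpa using h.symm
  have hi : ∀ α β : Fin D, (Finsupp.single α 1 : Fin D →₀ ℕ) = Finsupp.single β 1 ↔ α = β :=
    fun α β => (Finsupp.single_left_injective one_ne_zero).eq_iff
  have pC : ∀ (N : Fin D →₀ ℕ) (z : ℂ), pderiv N (C z : DiffPolyD D) = 0 := fun N z => pderiv_C
  have pU0 : pderiv 0 U = 0 := by
    rw [hU, map_sum]
    refine Finset.sum_eq_zero fun α _ => ?_
    rw [Derivation.leibniz, pC, pderiv_X_of_ne (h0ne α).symm]; simp
  have pUs : ∀ β, pderiv (Finsupp.single β 1) U = C (cc β) := by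
    intro β
    rw [hU, map_sum, Finset.sum_eq_single β]
    · rw [Derivation.leibniz, pC, pderiv_X_self]; simp
    · intro α _ hα
      rw [Derivation.leibniz, pC, pderiv_X_of_ne (fun e => hα ((hi _ _).mp e))]; simp
    · simp
  have pUn : MokSmall (fun N => pderiv N U) := by
    intro N _ hN
    simp only
    rw [hU, map_sum]
    refine Finset.sum_eq_zero fun α _ => ?_
    rw [Derivation.leibniz, pC, pderiv_X_of_ne (hN α).symm]; simp
  have pe0 : ∀ p, pderiv 0 (ev p) = ev p.derivative := by
    intro p; rw [hev, mok_pderiv_aeval, pderiv_X_self, mul_one]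
  have pes : ∀ β p, pderiv (Finsupp.single β 1) (ev p) = 0 := by
    intro β p; rw [hev, mok_pderiv_aeval, pderiv_X_of_ne (h0ne β), mul_zero]
  have pB0 : pderiv 0 (h * U) = h' * U := by
    rw [Derivation.leibniz, pU0, hh, pe0]; simp [mul_comm, hh']
  have pBs : ∀ β, pderiv (Finsupp.single β 1) (h * U) = h * C (cc β) := by
    intro β
    rw [Derivation.leibniz, pUs, hh, pes]; simp
  have pBn : MokSmall (fun N => pderiv N (h * U)) := by
    intro N h1 h2
    have e1 := pUn N h1 h2
    have e2 := mok_small_aeval k N h1 h2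
    simp only at e1 e2
    simp only
    rw [Derivation.leibniz, e1, hh, hev, e2]; simp
  -- the total derivative along cc
  let δ : DiffPolyD D → DiffPolyD D := fun f => ∑ α, C (cc α) * derD D α f
  let d : LPolyD D → LPolyD D := fun p => ∑ α, C (C (cc α)) * dmapD D α p
  have δev : ∀ p, δ (ev p) = ev p.derivative * U := by
    intro p
    simp only [δ, hev, mok_der_aeval, hU, Finset.mul_sum]
    exact Finset.sum_congr rfl fun α _ => by ring
  have δadd : ∀ p q, d (p + q) = d p + d q := by
    intro p q
    simp only [d, mok_dmap_add, mul_add, Finset.sum_add_distrib]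
  have dC : ∀ f, d (C f) = C (δ f) := by
    intro f
    simp only [d, δ, mok_dmap_C, map_sum, C_mul]
  have dCl : ∀ f, d (C f * l) = C (δ f) * l := by
    intro f
    simp only [d, δ, hl, mok_dmap_mul_C, map_sum, C_mul, Finset.sum_mul, mul_assoc]
  have δmul : ∀ f f', δ (f * f') = f * δ f' + δ f * f' := by
    intro f f'
    simp only [δ, Derivation.leibniz, smul_eq_mul, Finset.mul_sum, Finset.sum_mul,
      ← Finset.sum_add_distrib]
    exact Finset.sum_congr rfl fun α _ => by ring
  have dsum : ∀ r : LPolyD D, ∑ α, C (C (cc α)) * (X α * r + dmapD D α r) = l * r + d r := by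
    intro r
    simp only [hlsum, d, Finset.sum_mul, ← Finset.sum_add_distrib]
    exact Finset.sum_congr rfl fun α _ => by ring
  have hop : ∀ r, hOp D H r = C (h * U) * r + C G * (l * r + d r) := by
    intro r
    rw [mok_hOp _ _ H hH0, hB, ← dsum]
    congr 1
    rw [Finset.mul_sum]
    refine Finset.sum_congr rfl fun α _ => ?_
    rw [evC, C_mul]; ring
  have hopadd : ∀ r s, hOp D H (r + s) = hOp D H r + hOp D H s := by
    intro r s
    simp only [hop, δadd]; ring
  have hopsum : ∀ (r : Fin D → LPolyD D), ∑ α, hOp D H (r α) = hOp D H (∑ α, r α) := by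
    intro r
    exact (map_sum (AddMonoidHom.mk' (hOp D H) hopadd) r Finset.univ).symm
  -- the four brackets
  have m1 : mfD D H (X 0) (h * U) = C (h' * U) * H + C h * (l * H + d H) := by
    rw [mok_mf_left _ _ H hH0 _ pBn, pB0, ← dsum]
    congr 1
    simp only [pBs]
    rw [Finset.mul_sum]
    refine Finset.sum_congr rfl fun α _ => ?_
    rw [C_mul]; ring
  have m2 : ∀ α, mfD D H (X 0) (ev (Polynomial.C (cc α) * g)) = C (C (cc α)) * (C (2 * h) * H) := by
    intro α
    rw [mok_mf_left _ _ H hH0 (ev (Polynomial.C (cc α) * g)) (mok_small_aeval _), pe0]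
    simp only [pes]
    rw [Polynomial.derivative_C_mul, evC, evd, C_mul]
    simp [mul_assoc]
  have m3 : mfD D H (h * U) (X 0) = - (C (h * U) * (C h * l) + C G * (l * (C h * l) + C (h' * U) * l)) := by
    rw [mok_mf_right H _ pBn, hopsum, ← hopadd]
    have e : (C (pderiv 0 (h * U)) + ∑ α, (-(X α * C (pderiv (Finsupp.single α 1) (h * U)))
        - C (derD D α (pderiv (Finsupp.single α 1) (h * U)))) : LPolyD D) = C (-h) * l := by
      have e1 : ∀ α, derD D α (h * C (cc α)) = C (cc α) * derD D α h := by
        intro α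
        rw [Derivation.leibniz, ← algebraMap_eq, Derivation.map_algebraMap]; simp
      have e2 : ∑ α, C (cc α) * derD D α h = h' * U := δev k
      have e3 : ∑ α, (X α * C (h * C (cc α)) : LPolyD D) = C h * l := by
        rw [hlsum, Finset.mul_sum]
        exact Finset.sum_congr rfl fun α _ => by rw [C_mul]; ring
      simp only [pB0, pBs, e1]
      rw [Finset.sum_sub_distrib, Finset.sum_neg_distrib, e3, ← map_sum, e2, C_neg]
      ring
    rw [e, hop, dCl, show δ (-h) = - (h' * U) by
      rw [hh, ← map_neg, δev, Polynomial.derivative_neg, map_neg, neg_mul]]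
    simp only [C_neg]
    ring
  have m4 : ∀ α, mfD D H (ev (Polynomial.C (cc α) * g)) (X 0) =
      C (C (cc α)) * (C (2 * h) * H + C G * C (2 * (h' * U))) := by
    intro α
    rw [mok_mf_right H (ev (Polynomial.C (cc α) * g)) (mok_small_aeval _), hopsum, ← hopadd, pe0]
    simp only [pes]
    have e2 : δ (ev (Polynomial.C (cc α) * g).derivative) = C (cc α) * (2 * (h' * U)) := by
      rw [δev, Polynomial.derivative_C_mul, Polynomial.derivative_C_mul, evC, hk,
        show Polynomial.derivative (2 * k) = 2 * Polynomial.derivative k by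
          rw [two_mul, two_mul, Polynomial.derivative_add], map_mul, map_ofNat]
      ring
    simp only [mul_zero, neg_zero, map_zero, sub_zero, Finset.sum_const_zero, add_zero]
    rw [hop, dC, e2, Polynomial.derivative_C_mul, evC, evd, hHl]
    simp only [C_mul]
    ring
  have δG : δ G = 2 * h * U := by rw [hG, δev, evd]
  have δh : δ h = h' * U := δev k
  have dH : d H = C (h * δ U + h' * U * U) + C (2 * h * U) * l := by
    rw [hHl, δadd, dC, dCl, δmul, δG, δh]
  rw [mok_jac _ _ H hH0, hB]
  set m : MvPolynomial (Fin D) (LPolyD D) := ∑ α, C (C (C (cc α))) * X α with hm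
  have s1 : ∀ q, ∑ α, X α * (C (C (C (cc α)) * q) : MvPolynomial (Fin D) (LPolyD D)) = m * C q := by
    intro q
    rw [hm, Finset.sum_mul]
    exact Finset.sum_congr rfl fun α _ => by rw [C_mul]; ring
  have s2 : ∀ (f : LPolyD D →+* MvPolynomial (Fin D) (LPolyD D)) (hf : ∀ z, f (C z) = C (C z)) (q),
      ∑ α, C (X α) * f (C (C (cc α)) * q) = C l * f q := by
    intro f hf q
    rw [hlsum, map_sum, Finset.sum_mul]
    exact Finset.sum_congr rfl fun α _ => by rw [map_mul, hf, C_mul]; ring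
  set φ : LPolyD D →+* MvPolynomial (Fin D) (LPolyD D) :=
    eval₂Hom (C.comp C) (fun α => C (X α) + X α) with hφ
  set ψ : LPolyD D →+* MvPolynomial (Fin D) (LPolyD D) := map C with hψ
  have φC : ∀ z, φ (C z) = C (C z) := by intro z; simp [hφ]
  have ψC : ∀ z, ψ (C z) = C (C z) := by intro z; simp [hψ]
  have φl : φ l = C l + m := by
    rw [hlsum, map_sum, map_sum, hm, ← Finset.sum_add_distrib]
    refine Finset.sum_congr rfl fun α _ => ?_
    rw [map_mul, φC, C_mul, hφ, coe_eval₂Hom, eval₂_X]; ring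
  have ψl : ψ l = m := by
    rw [hlsum, map_sum, hm]
    refine Finset.sum_congr rfl fun α _ => ?_
    rw [map_mul, ψC, hψ, map_X]
  simp only [m2, m4, s1, s2 φ φC, s2 ψ ψC]
  rw [m1, m3, dH, hHl]
  simp only [map_add, map_mul, map_neg, φC, ψC, φl, ψl, map_ofNat]
  ring

/-- (Mokhov, scalar case.)  The `D`-dimensional scalar
`λ`-bracket of hydrodynamic type `{u_λ u} = Σ_α (a_α λ_α + b_α ∂_α u)` (with
`a_α`, `b_α` functions of `u` only) is skew-symmetric iff `2 b_α = a_α'` for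
all `α`; moreover, assuming skew-symmetry, if additionally `a_α = c_α g` for
constants `c_α` and a single function `g(u)`, then the Jacobi identity holds
on the generator and the bracket defines a `D`-dimensional Poisson vertex
algebra structure. -/
theorem mokhov_scalar_multidimensional
    (D : ℕ) (a b : Fin D → Polynomial ℂ) (cc : Fin D → ℂ) (g : Polynomial ℂ)
    (H : LPolyD D)
    (hH : H = ∑ α : Fin D,
      (MvPolynomial.C (Polynomial.aeval
          (MvPolynomial.X 0 : DiffPolyD D) (b α) *
          MvPolynomial.X (Finsupp.single α 1)) +
        MvPolynomial.C (Polynomial.aeval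
          (MvPolynomial.X 0 : DiffPolyD D) (a α)) * MvPolynomial.X α)) :
    (H + negSubstD D H = 0 ↔
      ∀ α : Fin D, 2 * b α = Polynomial.derivative (a α)) ∧
    ((∀ α : Fin D, 2 * b α = Polynomial.derivative (a α)) →
      (∀ α : Fin D, a α = Polynomial.C (cc α) * g) →
      jacD D H = 0) := by
  have hH' : H = C (∑ α, Polynomial.aeval (X 0 : DiffPolyD D) (b α) * X (Finsupp.single α 1)) +
      ∑ α, C (Polynomial.aeval (X 0 : DiffPolyD D) (a α)) * X α := by
    rw [hH, Finset.sum_add_distrib, map_sum]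
  refine ⟨?_, ?_⟩
  · rw [mok_negSubst _ _ H hH', hH']
    exact mok_skew D a b
  · intro hb ha
    have h2 : (Polynomial.C (2⁻¹ : ℂ)) * 2 = 1 := by
      rw [← Polynomial.C_ofNat, ← Polynomial.C_mul]; norm_num
    have hbb : ∀ α, b α = Polynomial.C (cc α) * (Polynomial.C 2⁻¹ * Polynomial.derivative g) := by
      intro α
      have e := hb α
      rw [ha α, Polynomial.derivative_C_mul] at e
      linear_combination Polynomial.C (2⁻¹ : ℂ) * e - b α * h2
    refine mok_jac_final D cc g (Polynomial.C 2⁻¹ * Polynomial.derivative g) ?_ H ?_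
    · linear_combination - Polynomial.derivative g * h2
    · rw [hH']
      simp only [← ha, ← hbb]
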